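/- Let Γ be a group and let ρ₁, ρ₂ : Γ → PSL(2,ℝ) be group homomorphisms. Assume that the subgroup ρ₁(Γ) is non-elementary and is not discrete, and that for every γ ∈ Γ the rotation numbers of ρ₁(γ) and ρ₂(γ) coincide: rot(ρ₁(γ)) = rot(ρ₂(γ)) in ℝ/2πℤ. Then there exists g ∈ PSL(2,ℝ) such that ρ₁(γ) = g ρ₂(γ) g⁻¹ for all γ ∈ Γ. -/

import Mathlib

/-!
`PSL2R` is `PSL(2,ℝ) = SL(2,ℝ)/{±1}`, realized as the quotient of `SL(2,ℝ)` by its center.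
-/

open Matrix Real

noncomputable section

/-- `SL(2,ℝ)`. -/
abbrev SL2R := Matrix.SpecialLinearGroup (Fin 2) ℝ

/-- The topology on `SL(2,ℝ)` induced from the space of matrices. -/
instance : TopologicalSpace SL2R :=
  TopologicalSpace.induced (fun g => (g : Matrix (Fin 2) (Fin 2) ℝ)) inferInstance

/-- `PSL(2,ℝ) = SL(2,ℝ)/{±1}`, the quotient of `SL(2,ℝ)` by its center. -/
abbrev PSL2R := SL2R ⧸ Subgroup.center SL2R

/-- The rotation matrix `R(θ) = [[cos θ, sin θ], [-sin θ, cos θ]]`, as an element of `SL(2,ℝ)`. -/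
def rotMat (θ : ℝ) : SL2R :=
  ⟨!![Real.cos θ, Real.sin θ; -Real.sin θ, Real.cos θ], by
    simp [Matrix.det_fin_two_of]
    ring_nf
    nlinarith [Real.sin_sq_add_cos_sq θ]⟩

/-- The absolute value of the trace, well defined on `PSL(2,ℝ)`. -/
def absTrace (A : PSL2R) : ℝ :=
  |Matrix.trace ((Quotient.out A : SL2R) : Matrix (Fin 2) (Fin 2) ℝ)|

/-- An element of `PSL(2,ℝ)` is elliptic if `|tr| < 2`. -/
def IsElliptic (A : PSL2R) : Prop := absTrace A < 2

/-- The rotation number of an element of `PSL(2,ℝ)`, in `ℝ/2πℤ`: it is `2θ` if the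
element is conjugate to the class of `R(θ)` with `θ ∈ (0,π)` (i.e. elliptic), and `0`
otherwise (hyperbolic, parabolic, identity). -/
def rot (A : PSL2R) : AddCircle (2 * π) :=
  open Classical in
  if h : ∃ θ ∈ Set.Ioo (0:ℝ) π, IsConj (QuotientGroup.mk (rotMat θ) : PSL2R) A then
    ((2 * h.choose : ℝ) : AddCircle (2 * π))
  else 0

/-- A subgroup of `PSL(2,ℝ)` is discrete if it is a discrete subset of the
topological group `PSL(2,ℝ)`. -/
def IsDiscreteSubgroup (G : Subgroup PSL2R) : Prop := DiscreteTopology G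

/-- The boundary circle `∂ℍ² = ℝ ∪ {∞}`, realized as the real projective line. -/
def Boundary := Projectivization ℝ (Fin 2 → ℝ)

/-- An element of `SL(2,ℝ)`, viewed as an invertible matrix. -/
def slInvertible (g : SL2R) : Invertible (g : Matrix (Fin 2) (Fin 2) ℝ) :=
  haveI : Invertible (g : Matrix (Fin 2) (Fin 2) ℝ).det := by rw [g.prop]; exact invertibleOne
  Matrix.invertibleOfDetInvertible _

/-- The (Möbius) action of `SL(2,ℝ)` on the boundary circle `∂ℍ² = ℝP¹`. -/
def boundaryAct (g : SL2R) (p : Boundary) : Boundary :=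
  Projectivization.map
    ((Matrix.toLinearEquiv' (g : Matrix (Fin 2) (Fin 2) ℝ) (slInvertible g)) :
      (Fin 2 → ℝ) →ₗ[ℝ] (Fin 2 → ℝ))
    (Matrix.toLinearEquiv' (g : Matrix (Fin 2) (Fin 2) ℝ) (slInvertible g)).injective p

/-- A subgroup of `PSL(2,ℝ)` is elementary if it has a finite orbit in `ℍ² ∪ ∂ℍ²`:
either the orbit of some point of the hyperbolic plane `ℍ²` is finite, or the orbit of some
point of the boundary circle `∂ℍ²` is finite. (The action of a class in `PSL(2,ℝ)` is
computed via representatives in `SL(2,ℝ)`; the center acts trivially.) -/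
def IsElementary (G : Subgroup PSL2R) : Prop :=
  (∃ z : UpperHalfPlane,
    Set.Finite {w : UpperHalfPlane | ∃ g : SL2R, (QuotientGroup.mk g : PSL2R) ∈ G ∧ g • z = w}) ∨
  (∃ p : Boundary,
    Set.Finite {q : Boundary | ∃ g : SL2R, (QuotientGroup.mk g : PSL2R) ∈ G ∧ boundaryAct g p = q})

end

/-!
The group `ρ₁(Γ)` contains an elliptic element of infinite order. Since `ρ₁(Γ)` is not elementary,
there are finitely many `C ∈ ρ₁(Γ)` such that each nonscalar `A` satisfies
`δ = tr [A, C A C⁻¹] - 2 ≠ 0` for one of them. For `A ∈ ρ₁(Γ)` close to `1`, this yields, via the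
identity `δ = -(tr (A B) - 2) (tr (A B⁻¹) - 2)` for `tr A = tr B`, an elliptic `E ∈ ρ₁(Γ)` in a
pair `(E, D)` with small positive defect. Along its Jørgensen sequence the defect decreases
strictly, while all traces stay in one number field; if every elliptic element had finite order,
infinitely many algebraic integers of that field would have all their conjugates in `[-2, 2]`.

After conjugation both representations send some `α` to the same rotation of infinite order, whose
powers are dense in the circle. Writing a real `2 × 2` matrix as `v ↦ a v + b (conj v)` on `ℂ`, the
equality of traces of the elliptic elements `ρ₁(αⁿ γ)` with those of `ρ₂(αⁿ γ)` determines `a` up to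
sign. Comparing `a` on `γ γ'` and on `γ α γ'` shows that the products `b (conj b')` agree, so the
two families of antilinear parts differ by a unit complex number, which is a conjugation by a
rotation.
-/

section CommutatorTrace

variable {R : Type*} [CommRing R]

/-- The invariant `-det (AB - BA)` of a pair of `2 × 2` matrices. On `SL₂` it equals
`tr (A B A⁻¹ B⁻¹) - 2`, and over a field it vanishes iff `A` and `B` have a common eigenvector
over the algebraic closure. -/
def commDefect (A B : Matrix (Fin 2) (Fin 2) R) : R := -det ⁅A, B⁆

lemma commDefect_eq_trace (A B : Matrix (Fin 2) (Fin 2) R) :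
    commDefect A B = A.trace ^ 2 * B.det + B.trace ^ 2 * A.det + (A * B).trace ^ 2
      - A.trace * B.trace * (A * B).trace - 4 * A.det * B.det := by
  simp only [commDefect, Ring.lie_def, det_fin_two, trace_fin_two, Matrix.sub_apply,
    Matrix.mul_apply, Fin.sum_univ_two]
  ring

lemma commDefect_comm (A B : Matrix (Fin 2) (Fin 2) R) : commDefect A B = commDefect B A := by
  rw [commDefect_eq_trace, commDefect_eq_trace, trace_mul_comm A B]
  ring

lemma commDefect_mul_left (A B : Matrix (Fin 2) (Fin 2) R) :
    commDefect (A * B) A = A.det * commDefect A B := by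
  have h : ⁅A * B, A⁆ = A * ⁅B, A⁆ := by simp only [Ring.lie_def]; noncomm_ring
  rw [commDefect_comm A B, commDefect, commDefect, h, det_mul]
  ring

namespace SL2

/-- The trace of an element of `SL(2, R)`. -/
def tr (M : Matrix.SpecialLinearGroup (Fin 2) R) : R := trace (M : Matrix (Fin 2) (Fin 2) R)

variable (M N C : Matrix.SpecialLinearGroup (Fin 2) R)

lemma tr_eq : tr M = M 0 0 + M 1 1 := trace_fin_two _

lemma tr_one : tr (1 : Matrix.SpecialLinearGroup (Fin 2) R) = 2 := by
  simp [tr]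

lemma tr_neg : tr (-M) = -tr M := by
  simp [tr]

lemma tr_inv : tr M⁻¹ = tr M := by
  simp [tr_eq, Matrix.SpecialLinearGroup.coe_inv, adjugate_fin_two, add_comm]

lemma tr_mul_comm : tr (M * N) = tr (N * M) := by
  rw [tr, tr, Matrix.SpecialLinearGroup.coe_mul, Matrix.SpecialLinearGroup.coe_mul, trace_mul_comm]

lemma tr_conj : tr (C * M * C⁻¹) = tr M := by
  rw [tr_mul_comm, inv_mul_cancel_left]

lemma tr_mul_add_tr_mul_inv : tr (M * N) + tr (M * N⁻¹) = tr M * tr N := by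
  simp only [tr_eq, Matrix.SpecialLinearGroup.coe_mul, Matrix.SpecialLinearGroup.coe_inv,
    adjugate_fin_two, Matrix.mul_apply, Fin.sum_univ_two, of_apply, cons_val', cons_val_zero,
    cons_val_one, cons_val_fin_one]
  ring

lemma commDefect_eq :
    commDefect (R := R) M N
      = tr M ^ 2 + tr N ^ 2 + tr (M * N) ^ 2 - tr M * tr N * tr (M * N) - 4 := by
  rw [commDefect_eq_trace, M.det_coe, N.det_coe, tr, tr, tr, Matrix.SpecialLinearGroup.coe_mul]
  ring

lemma commDefect_mul_self : commDefect (R := R) ↑(M * N) M = commDefect (R := R) M N := by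
  rw [Matrix.SpecialLinearGroup.coe_mul, commDefect_mul_left, M.det_coe, one_mul]

lemma commDefect_inv_right : commDefect (R := R) M ↑N⁻¹ = commDefect (R := R) M N := by
  have h := tr_mul_add_tr_mul_inv M N
  rw [commDefect_eq, commDefect_eq, tr_inv, eq_sub_of_add_eq' h]
  ring

lemma det_sub_one : det ((M : Matrix (Fin 2) (Fin 2) R) - 1) = 2 - tr M := by
  have hM := M.det_coe
  rw [det_fin_two] at hM
  simp only [det_fin_two, tr_eq, Matrix.sub_apply, Matrix.one_apply_eq, ne_eq, zero_ne_one,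
    one_ne_zero, not_false_eq_true, Matrix.one_apply_ne, sub_zero]
  linear_combination hM

lemma tr_commutator : tr (M * N * M⁻¹ * N⁻¹) = commDefect (R := R) M N + 2 := by
  have h : ⁅(M : Matrix (Fin 2) (Fin 2) R), (N : Matrix (Fin 2) (Fin 2) R)⁆ =
      (↑(M * N * M⁻¹ * N⁻¹) - 1) * (N * M : Matrix.SpecialLinearGroup (Fin 2) R) := by
    rw [Ring.lie_def, sub_mul, one_mul, ← Matrix.SpecialLinearGroup.coe_mul,
      ← Matrix.SpecialLinearGroup.coe_mul, ← Matrix.SpecialLinearGroup.coe_mul,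
      show M * N * M⁻¹ * N⁻¹ * (N * M) = M * N by group]
  rw [commDefect, h, det_mul, det_sub_one, Matrix.SpecialLinearGroup.det_coe]
  ring

lemma tr_mul_conj : tr (M * (N * M * N⁻¹)) = tr M ^ 2 - 2 - commDefect (R := R) M N := by
  have h := tr_mul_add_tr_mul_inv M (N * M * N⁻¹)
  rw [tr_conj, show M * (N * M * N⁻¹)⁻¹ = M * N * M⁻¹ * N⁻¹ by group, tr_commutator] at h
  linear_combination h

lemma commDefect_conj_right :
    commDefect (M : Matrix (Fin 2) (Fin 2) R) ↑(N * M * N⁻¹)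
      = commDefect (R := R) M N * (4 - tr M ^ 2 + commDefect (R := R) M N) := by
  rw [commDefect_eq M (N * M * N⁻¹), tr_conj, tr_mul_conj]
  ring

variable {M N} in
lemma commDefect_eq_neg_mul (h : tr N = tr M) :
    commDefect (R := R) M N = -((tr (M * N) - 2) * (tr (M * N⁻¹) - 2)) := by
  have := tr_mul_add_tr_mul_inv M N
  rw [commDefect_eq, h, eq_sub_of_add_eq' this, h]
  ring

end SL2

end CommutatorTrace

section FiniteOrder

open Polynomial

/-- `x` is a torsion trace if `Dₙ(x) = 2` for some `n ≠ 0`, where `Dₙ` is the Dickson polynomial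
expressing `tr Mⁿ` through `tr M` on `SL₂`. -/
def IsTorsionTrace {R : Type*} [CommRing R] (x : R) : Prop :=
  ∃ n ≠ 0, (dickson 1 1 n).eval x = 2

lemma isTorsionTrace_map_iff {R S : Type*} [CommRing R] [CommRing S] {f : R →+* S}
    (hf : Function.Injective f) {x : R} : IsTorsionTrace (f x) ↔ IsTorsionTrace x := by
  refine exists_congr fun n => and_congr_right fun _ => ?_
  have h : (dickson 1 1 n).eval (f x) = f ((dickson 1 1 n).eval x) := by
    rw [← eval_map_apply, map_dickson, map_one]
  rw [h, ← map_ofNat f 2, hf.eq_iff]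

lemma IsTorsionTrace.exists_eq_add_inv {K : Type*} [Field K] [IsAlgClosed K] {x : K}
    (hx : IsTorsionTrace x) : ∃ ζ : K, ∃ n ≠ 0, ζ ^ n = 1 ∧ x = ζ + ζ⁻¹ := by
  obtain ⟨n, hn, hx⟩ := hx
  obtain ⟨ζ, hζ⟩ := IsAlgClosed.exists_root (C 1 * X ^ 2 + C (-x) * X + C 1)
    (by rw [degree_quadratic one_ne_zero]; exact two_ne_zero)
  have hζ' : ζ ^ 2 - x * ζ + 1 = 0 := by simpa [← sub_eq_add_neg] using hζ
  have hζ₀ : ζ ≠ 0 := by rintro rfl; simp at hζ'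
  have hxζ : x = ζ + ζ⁻¹ := by field_simp; linear_combination -hζ'
  refine ⟨ζ, n, hn, ?_, hxζ⟩
  rw [hxζ, dickson_one_one_eval_add_inv _ _ (mul_inv_cancel₀ hζ₀), inv_pow] at hx
  have hsq : (ζ ^ n - 1) ^ 2 = 0 := by
    linear_combination ζ ^ n * hx - mul_inv_cancel₀ (pow_ne_zero n hζ₀)
  exact sub_eq_zero.1 (pow_eq_zero_iff two_ne_zero |>.1 hsq)

lemma IsTorsionTrace.isIntegral {K : Type*} [Field K] {x : K} (hx : IsTorsionTrace x) :
    IsIntegral ℤ x := by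
  let φ := algebraMap K (AlgebraicClosure K)
  obtain ⟨ζ, n, hn, hζ, hxζ⟩ := ((isTorsionTrace_map_iff φ.injective).2 hx).exists_eq_add_inv
  have hint : ∀ η : AlgebraicClosure K, η ^ n = 1 → IsIntegral ℤ η := fun η hη =>
    .of_pow (Nat.pos_of_ne_zero hn) (hη ▸ isIntegral_one)
  refine (isIntegral_algHom_iff φ.toIntAlgHom φ.injective).1 ?_
  exact hxζ ▸ (hint ζ hζ).add (hint ζ⁻¹ (by rw [inv_pow, hζ, inv_one]))

-- Such an `x` is an algebraic integer whose conjugates `ζ + ζ⁻¹` all lie in `[-2, 2]`.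
lemma finite_setOf_isTorsionTrace (K : Type*) [Field K] [NumberField K] :
    {x : K | IsTorsionTrace x}.Finite := by
  refine (NumberField.Embeddings.finite_of_norm_le K ℂ 2).subset fun x hx =>
    ⟨hx.isIntegral, fun φ => ?_⟩
  obtain ⟨ζ, n, hn, hζ, hxζ⟩ := ((isTorsionTrace_map_iff φ.injective).2 hx).exists_eq_add_inv
  have hnorm : ‖ζ‖ = 1 := Complex.norm_eq_one_of_pow_eq_one hζ hn
  calc ‖φ x‖ = ‖ζ + ζ⁻¹‖ := by rw [hxζ]
    _ ≤ ‖ζ‖ + ‖ζ⁻¹‖ := norm_add_le _ _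
    _ = 2 := by rw [norm_inv, hnorm]; norm_num

namespace SL2

lemma tr_pow {R : Type*} [CommRing R] (M : Matrix.SpecialLinearGroup (Fin 2) R) :
    ∀ n : ℕ, tr (M ^ n) = (dickson 1 1 n).eval (tr M)
  | 0 => by rw [pow_zero, tr_one, dickson_zero]; norm_num
  | 1 => by rw [pow_one, dickson_one, eval_X]
  | n + 2 => by
    have h := tr_mul_add_tr_mul_inv (M ^ (n + 1)) M
    rw [← pow_succ, pow_succ M n, mul_inv_cancel_right, ← pow_succ, tr_pow M n,
      tr_pow M (n + 1)] at h
    rw [dickson_add_two, eval_sub, eval_mul, eval_X, C_1, one_mul]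
    linear_combination h

lemma isTorsionTrace_tr {R : Type*} [CommRing R] {M : Matrix.SpecialLinearGroup (Fin 2) R}
    (hM : IsOfFinOrder M) : IsTorsionTrace (tr M) := by
  obtain ⟨n, hn, hMn⟩ := isOfFinOrder_iff_pow_eq_one.1 hM
  exact ⟨n, hn.ne', by rw [← tr_pow, hMn, tr_one]⟩

end SL2

end FiniteOrder

section Jorgensen

lemma strictAnti_of_succ_eq_mul {c : ℝ} {x : ℕ → ℝ} (hc : 0 ≤ c) (h₀ : 0 < x 0)
    (h₁ : c + x 0 < 1) (hx : ∀ k, x (k + 1) = x k * (c + x k)) :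
    (∀ k, 0 < x k) ∧ StrictAnti x := by
  have hbound : ∀ k, 0 < x k ∧ x k ≤ x 0 := by
    intro k
    induction k with
    | zero => exact ⟨h₀, le_rfl⟩
    | succ k ih =>
      rw [hx]
      exact ⟨mul_pos ih.1 (by linarith [ih.1]),
        (mul_le_of_le_one_right ih.1.le (by linarith [ih.2])).trans ih.2⟩
  refine ⟨fun k => (hbound k).1, strictAnti_nat_of_succ_lt fun k => ?_⟩
  rw [hx]
  exact mul_lt_of_lt_one_right (hbound k).1 (by linarith [(hbound k).2])

open SL2

/-- The Jørgensen sequence `D₀ = D`, `Dₖ₊₁ = Dₖ E Dₖ⁻¹` of a pair `(E, D)`. For matrices, the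
numbers `commDefect E Dₖ` are the iterates of one quadratic map. -/
def jorgensenSeq {G : Type*} [Group G] (E D : G) : ℕ → G
  | 0 => D
  | k + 1 => jorgensenSeq E D k * E * (jorgensenSeq E D k)⁻¹

lemma jorgensenSeq_mem {G : Type*} [Group G] {H : Subgroup G} {E D : G} (hE : E ∈ H) (hD : D ∈ H) :
    ∀ k, jorgensenSeq E D k ∈ H
  | 0 => hD
  | k + 1 =>
    H.mul_mem (H.mul_mem (jorgensenSeq_mem hE hD k) hE) (H.inv_mem (jorgensenSeq_mem hE hD k))

-- All the traces `x ^ 2 - 2 - δ k` lie in the number field generated by `x` and `δ 0`.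
lemma not_injective_of_isTorsionTrace {x : ℝ} {δ : ℕ → ℝ}
    (hδ : ∀ k, δ (k + 1) = δ k * (4 - x ^ 2 + δ k)) (hx : IsTorsionTrace x)
    (h : ∀ k, IsTorsionTrace (x ^ 2 - 2 - δ k)) : ¬ Function.Injective δ := by
  intro hinj
  let K : IntermediateField ℚ ℝ := .adjoin ℚ {x, x ^ 2 - 2 - δ 0}
  have : FiniteDimensional ℚ K := by
    refine IntermediateField.finiteDimensional_adjoin fun y hy => IsIntegral.tower_top (R := ℤ) ?_
    rcases hy with rfl | rfl
    exacts [hx.isIntegral, (h 0).isIntegral]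
  have : NumberField K := ⟨⟩
  have hx_mem : x ^ 2 ∈ K := pow_mem (IntermediateField.subset_adjoin _ _ (by simp)) 2
  have hδ_mem (k : ℕ) : δ k ∈ K := by
    induction k with
    | zero =>
      have h₀ : x ^ 2 - 2 - δ 0 ∈ K := IntermediateField.subset_adjoin _ _ (by simp)
      simpa using sub_mem (sub_mem hx_mem (ofNat_mem K 2)) h₀
    | succ k ih => exact hδ k ▸ mul_mem ih (add_mem (sub_mem (ofNat_mem K 4) hx_mem) ih)
  refine Set.infinite_of_injective_forall_mem
    (f := fun k => (⟨_, sub_mem (sub_mem hx_mem (ofNat_mem K 2)) (hδ_mem k)⟩ : K))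
    (fun i j hij => hinj (sub_right_injective (Subtype.ext_iff.1 hij)))
    (fun k => (isTorsionTrace_map_iff (algebraMap K ℝ).injective).1 (h k))
    (finite_setOf_isTorsionTrace K)

lemma exists_elliptic_not_isOfFinOrder_of_commDefect_lt {G : Subgroup SL2R} {E D : SL2R}
    (hE : E ∈ G) (hD : D ∈ G) (hE₂ : |tr E| < 2) (hpos : 0 < commDefect (R := ℝ) E D)
    (hlt : commDefect (R := ℝ) E D + 3 < tr E ^ 2) :
    ∃ M ∈ G, |tr M| < 2 ∧ ¬ IsOfFinOrder M := by
  by_contra! hfin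
  obtain ⟨δ, hδ⟩ : ∃ δ : ℕ → ℝ, ∀ k, δ k = commDefect (R := ℝ) E ↑(jorgensenSeq E D k) :=
    ⟨_, fun _ => rfl⟩
  have hδ₀ : δ 0 = commDefect (R := ℝ) E D := by rw [hδ, jorgensenSeq]
  have hδ_succ (k : ℕ) : δ (k + 1) = δ k * (4 - tr E ^ 2 + δ k) := by
    rw [hδ, hδ, jorgensenSeq, commDefect_conj_right]
  have htr (k : ℕ) : tr (E * jorgensenSeq E D (k + 1)) = tr E ^ 2 - 2 - δ k := by
    rw [hδ, jorgensenSeq, tr_mul_conj]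
  have hE₄ : tr E ^ 2 < 4 := by
    rw [← sq_abs]
    nlinarith [abs_nonneg (tr E)]
  obtain ⟨hδ_pos, hδ_anti⟩ := strictAnti_of_succ_eq_mul (sub_nonneg.2 hE₄.le) (hδ₀ ▸ hpos)
    (by linarith) hδ_succ
  refine not_injective_of_isTorsionTrace hδ_succ (isTorsionTrace_tr (hfin E hE hE₂)) (fun k => ?_)
    hδ_anti.injective
  have hδ_le : δ k ≤ δ 0 := hδ_anti.antitone (Nat.zero_le k)
  rw [← htr]
  refine isTorsionTrace_tr (hfin _ (G.mul_mem hE (jorgensenSeq_mem hE hD _)) ?_)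
  rw [htr, abs_lt]
  constructor <;> linarith [hδ_pos k]

end Jorgensen

section Eigenlines

open scoped LinearAlgebra.Projectivization

variable {K : Type*} [Field K] {X Y M : Matrix (Fin 2) (Fin 2) K} {v w : Fin 2 → K}

/-- The invariant lines of a `2 × 2` matrix, as points of the projective line. -/
def eigenlines (X : Matrix (Fin 2) (Fin 2) K) : Set (ℙ K (Fin 2 → K)) :=
  {p | ∃ a : K, X *ᵥ p.rep = a • p.rep}

lemma mk_mem_eigenlines (hv : v ≠ 0) :
    Projectivization.mk K v hv ∈ eigenlines X ↔ ∃ a : K, X *ᵥ v = a • v := by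
  obtain ⟨c, hc⟩ := Projectivization.exists_smul_eq_mk_rep K v hv
  refine exists_congr fun a => ?_
  rw [← hc, mulVec_smul, smul_comm a c, smul_left_cancel_iff]

lemma eq_zero_of_mulVec_pair_eq_zero (h : LinearIndependent K ![v, w]) (hv : M *ᵥ v = 0)
    (hw : M *ᵥ w = 0) : M = 0 := by
  refine (toLin' (R := K)).map_eq_zero_iff.1
    ((basisOfLinearIndependentOfCardEqFinrank h (by simp)).ext fun i => ?_)
  rw [coe_basisOfLinearIndependentOfCardEqFinrank, toLin'_apply, LinearMap.zero_apply]
  fin_cases i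
  exacts [hv, hw]

lemma exists_eq_smul_of_mulVec_eq_zero (hM : M ≠ 0) (hv₀ : v ≠ 0) (hv : M *ᵥ v = 0)
    (hw : M *ᵥ w = 0) : ∃ a : K, w = a • v := by
  by_contra! h
  exact hM (eq_zero_of_mulVec_pair_eq_zero
    ((LinearIndependent.pair_iff' hv₀).2 fun a => (h a).symm) hv hw)

lemma sub_smul_one_mulVec_eq_zero {a : K} : (X - a • 1) *ᵥ v = 0 ↔ X *ᵥ v = a • v := by
  rw [sub_mulVec, smul_mulVec, one_mulVec, sub_eq_zero]

lemma eigenlines_finite (hX : ∀ a : K, X ≠ a • 1) : (eigenlines X).Finite := by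
  have hline (a : K) : {p : ℙ K (Fin 2 → K) | X *ᵥ p.rep = a • p.rep}.Subsingleton := by
    intro p hp q hq
    obtain ⟨c, hc⟩ := exists_eq_smul_of_mulVec_eq_zero (sub_ne_zero.2 (hX a)) q.rep_nonzero
      (sub_smul_one_mulVec_eq_zero.2 hq) (sub_smul_one_mulVec_eq_zero.2 hp)
    rw [← p.mk_rep, ← q.mk_rep, Projectivization.mk_eq_mk_iff']
    exact ⟨c, hc.symm⟩
  have hfin := (Module.End.finite_hasEigenvalue (toLin' X)).biUnion fun a _ => (hline a).finite
  refine hfin.subset ?_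
  rintro p ⟨a, ha⟩
  exact Set.mem_biUnion (Module.End.hasEigenvalue_of_hasEigenvector
    (Module.End.hasEigenvector_iff.2 ⟨Module.End.mem_eigenspace_iff.2 ha, p.rep_nonzero⟩)) ha

lemma eigenlines_subset_of_commute (hX : ∀ a : K, X ≠ a • 1) (h : Commute X Y) :
    eigenlines X ⊆ eigenlines Y := by
  rintro p ⟨a, ha⟩
  have hY : X *ᵥ (Y *ᵥ p.rep) = a • (Y *ᵥ p.rep) := by
    rw [mulVec_mulVec, h.eq, ← mulVec_mulVec, ha, mulVec_smul]
  exact exists_eq_smul_of_mulVec_eq_zero (sub_ne_zero.2 (hX a)) p.rep_nonzero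
    (sub_smul_one_mulVec_eq_zero.2 ha) (sub_smul_one_mulVec_eq_zero.2 hY)

lemma mul_lie_add_lie_mul_left : X * ⁅X, Y⁆ + ⁅X, Y⁆ * X = X.trace • ⁅X, Y⁆ := by
  ext i j
  fin_cases i <;> fin_cases j <;>
    simp [Ring.lie_def, Matrix.mul_apply, Fin.sum_univ_two, trace_fin_two] <;> ring

lemma exists_mulVec_eq_smul_of_lie (hN : ⁅X, Y⁆ ≠ 0) (hv₀ : v ≠ 0) (hv : ⁅X, Y⁆ *ᵥ v = 0) :
    ∃ a : K, X *ᵥ v = a • v := by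
  refine exists_eq_smul_of_mulVec_eq_zero hN hv₀ hv ?_
  have h := congrArg (· *ᵥ v) (mul_lie_add_lie_mul_left (X := X) (Y := Y))
  simpa [add_mulVec, smul_mulVec, ← mulVec_mulVec, hv] using h

/-- McCoy's theorem for `2 × 2` matrices: a nonzero singular commutator `⁅X, Y⁆` is nilpotent, and
its kernel is invariant under `X` and `Y`. -/
lemma commute_or_inter_eigenlines_nonempty (h : commDefect X Y = 0) :
    Commute X Y ∨ (eigenlines X ∩ eigenlines Y).Nonempty := by
  refine or_iff_not_imp_left.2 fun hcomm => ?_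
  have hskew : ⁅Y, X⁆ = -⁅X, Y⁆ := (neg_sub (X * Y) (Y * X)).symm
  have hN : ⁅X, Y⁆ ≠ 0 := fun h₀ => hcomm (sub_eq_zero.1 h₀)
  obtain ⟨v, hv₀, hv⟩ := exists_mulVec_eq_zero_iff.2 (neg_eq_zero.1 h)
  refine ⟨.mk K v hv₀, (mk_mem_eigenlines hv₀).2 (exists_mulVec_eq_smul_of_lie hN hv₀ hv),
    (mk_mem_eigenlines hv₀).2 (exists_mulVec_eq_smul_of_lie (X := Y) (Y := X) ?_ hv₀ ?_)⟩
  · rwa [hskew, neg_ne_zero]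
  · rw [hskew, neg_mulVec, hv, neg_zero]

lemma eigenlines_nonempty_of_discr_nonneg {X : Matrix (Fin 2) (Fin 2) ℝ} (h : 0 ≤ X.discr) :
    (eigenlines X).Nonempty := by
  have hdet : (X - ((X.trace + √X.discr) / 2) • 1).det = 0 := by
    have hsq := Real.sq_sqrt h
    have hdiscr := discr_fin_two X
    rw [trace_fin_two, det_fin_two] at hdiscr
    simp only [det_fin_two, trace_fin_two, Matrix.sub_apply, Matrix.smul_apply, smul_eq_mul,
      Matrix.one_apply_eq, Matrix.one_apply_ne, ne_eq, zero_ne_one, one_ne_zero,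
      not_false_eq_true]
    linear_combination (hsq + hdiscr) / 4
  obtain ⟨v, hv₀, hv⟩ := exists_mulVec_eq_zero_iff.2 hdet
  exact ⟨.mk ℝ v hv₀, (mk_mem_eigenlines hv₀).2 ⟨_, sub_smul_one_mulVec_eq_zero.1 hv⟩⟩

end Eigenlines

section NonElementary

open scoped LinearAlgebra.Projectivization Pointwise

/-- B. H. Neumann's lemma: the group is covered by finitely many cosets of stabilizers of points
of `S`, so one of these stabilizers has finite index. -/
lemma exists_finite_orbit {G α : Type*} [Group G] [MulAction G α] {S : Set α} (hS : S.Finite)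
    (h : ∀ g : G, ∃ p ∈ S, g • p ∈ S) : ∃ p : α, (MulAction.orbit G p).Finite := by
  classical
  have hrep (x : α × α) : ∃ g : G, (∃ g' : G, g' • x.1 = x.2) → g • x.1 = x.2 := by
    by_cases hx : ∃ g' : G, g' • x.1 = x.2
    exacts [hx.imp fun g hg _ => hg, ⟨1, fun h' => absurd h' hx⟩]
  choose r hr using hrep
  have hcov :
      ⋃ x ∈ (hS.prod hS).toFinset, r x • (MulAction.stabilizer G x.1 : Set G) = Set.univ := by
    refine Set.eq_univ_of_forall fun g => ?_
    obtain ⟨p, hp, hgp⟩ := h g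
    refine Set.mem_biUnion (x := (p, g • p)) (by simpa using ⟨hp, hgp⟩) ?_
    rw [Set.mem_smul_set_iff_inv_smul_mem, smul_eq_mul, SetLike.mem_coe,
      MulAction.mem_stabilizer_iff, mul_smul, inv_smul_eq_iff]
    exact (hr (p, g • p) ⟨g, rfl⟩).symm
  obtain ⟨x, -, hx⟩ := Subgroup.exists_finiteIndex_of_leftCoset_cover hcov
  have hindex := hx.index_ne_zero
  rw [MulAction.index_stabilizer] at hindex
  exact ⟨x.1, Set.finite_of_ncard_ne_zero hindex⟩

section ConjBy

variable {R : Type*} [CommRing R]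

/-- The conjugate `C X C⁻¹` of a `2 × 2` matrix by an element of `SL₂`. -/
def conjBy (C : Matrix.SpecialLinearGroup (Fin 2) R) (X : Matrix (Fin 2) (Fin 2) R) :
    Matrix (Fin 2) (Fin 2) R :=
  C * X * ((C⁻¹ : Matrix.SpecialLinearGroup (Fin 2) R) : Matrix (Fin 2) (Fin 2) R)

variable (C : Matrix.SpecialLinearGroup (Fin 2) R)

lemma conjBy_one : conjBy C 1 = 1 := by
  rw [conjBy, mul_one, ← Matrix.SpecialLinearGroup.coe_mul, mul_inv_cancel,
    Matrix.SpecialLinearGroup.coe_one]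

lemma conjBy_inv_conjBy (X : Matrix (Fin 2) (Fin 2) R) : conjBy C⁻¹ (conjBy C X) = X := by
  have hC : ((C⁻¹ : Matrix.SpecialLinearGroup (Fin 2) R) : Matrix (Fin 2) (Fin 2) R) * C = 1 := by
    rw [← Matrix.SpecialLinearGroup.coe_mul, inv_mul_cancel, Matrix.SpecialLinearGroup.coe_one]
  rw [conjBy, conjBy, inv_inv, mul_assoc, mul_assoc, mul_assoc, hC, mul_one, ← mul_assoc, hC,
    one_mul]

lemma commDefect_smul_sub_smul_one (X : Matrix (Fin 2) (Fin 2) R) (k a : R) :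
    commDefect (k • (X - a • 1)) (conjBy C (k • (X - a • 1)))
      = k ^ 4 * commDefect X (conjBy C X) := by
  have hlie (Y : Matrix (Fin 2) (Fin 2) R) :
      ⁅k • (X - a • 1), k • (Y - a • 1)⁆ = (k ^ 2) • ⁅X, Y⁆ := by
    simp only [Ring.lie_def, mul_sub, sub_mul, smul_sub, mul_smul_comm, smul_mul_assoc, mul_one,
      one_mul, smul_smul]
    module
  have hconj : conjBy C (k • (X - a • 1)) = k • (conjBy C X - a • 1) := by
    have hone := conjBy_one C
    rw [conjBy, mul_one] at hone
    rw [conjBy, conjBy, mul_smul_comm, smul_mul_assoc, mul_sub, sub_mul, mul_smul_comm, mul_one,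
      smul_mul_assoc, hone]
  rw [hconj, commDefect, hlie, det_smul, commDefect, Fintype.card_fin]
  ring

lemma continuous_commDefect_conjBy [TopologicalSpace R] [IsTopologicalRing R] :
    Continuous fun X => commDefect X (conjBy C X) := by
  simp only [commDefect, conjBy, Ring.lie_def]
  fun_prop

end ConjBy

lemma smul_mem_eigenlines {K : Type*} [Field K] {X : Matrix (Fin 2) (Fin 2) K}
    {C : Matrix.SpecialLinearGroup (Fin 2) K} {p : ℙ K (Fin 2 → K)} (hp : p ∈ eigenlines X) :
    C • p ∈ eigenlines (conjBy C X) := by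
  induction p with | h v hv =>
  obtain ⟨a, ha⟩ := (mk_mem_eigenlines hv).1 hp
  refine (mk_mem_eigenlines _).2 ⟨a, ?_⟩
  have hC : ((C⁻¹ : Matrix.SpecialLinearGroup (Fin 2) K) : Matrix (Fin 2) (Fin 2) K) * C = 1 := by
    rw [← Matrix.SpecialLinearGroup.coe_mul, inv_mul_cancel, Matrix.SpecialLinearGroup.coe_one]
  change conjBy C X *ᵥ ((C : Matrix (Fin 2) (Fin 2) K) *ᵥ v) = a • (C *ᵥ v)
  rw [conjBy, mulVec_mulVec, mul_assoc, hC, mul_one, ← mulVec_mulVec, ha, mulVec_smul]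

lemma inv_smul_mem_eigenlines {K : Type*} [Field K] {X : Matrix (Fin 2) (Fin 2) K}
    {C : Matrix.SpecialLinearGroup (Fin 2) K} {p : ℙ K (Fin 2 → K)}
    (hp : p ∈ eigenlines (conjBy C X)) : C⁻¹ • p ∈ eigenlines X := by
  simpa only [conjBy_inv_conjBy] using smul_mem_eigenlines (C := C⁻¹) hp

lemma boundaryAct_eq_smul (g : SL2R) (p : ℙ ℝ (Fin 2 → ℝ)) : boundaryAct g p = g • p := by
  induction p with | h v hv =>
  rfl

lemma isElementary_of_finite_orbit {G : Subgroup PSL2R} {p : ℙ ℝ (Fin 2 → ℝ)}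
    (hp : (MulAction.orbit (G.comap (QuotientGroup.mk' (Subgroup.center SL2R))) p).Finite) :
    IsElementary G := by
  refine Or.inr ⟨p, hp.subset ?_⟩
  rintro _ ⟨g, hg, rfl⟩
  exact ⟨⟨g, hg⟩, (boundaryAct_eq_smul g p).symm⟩

lemma smul_eq_of_commute_conj {G α : Type*} [Group G] [MulAction G α] {g c : G} {z : α}
    (hfix : ∀ w : α, g • w = w ↔ w = z) (h : Commute g (c * g * c⁻¹)) : c • z = z := by
  have hconj : (c * g * c⁻¹) • z = z := by
    rw [← hfix, ← mul_smul, h.eq, mul_smul, (hfix z).2 rfl]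
  have hinv : c⁻¹ • z = z := by
    rw [← hfix]
    rwa [mul_smul, mul_smul, ← eq_inv_smul_iff] at hconj
  rw [← hinv, smul_inv_smul, hinv]

lemma exists_smul_eq_of_commute_conjBy {X : Matrix (Fin 2) (Fin 2) ℝ} (h : X.discr < 0) :
    ∃ z : UpperHalfPlane, ∀ C : SL2R, Commute X (conjBy C X) → C • z = z := by
  have hdet : 0 < X.det := by
    rw [discr_fin_two] at h
    nlinarith [sq_nonneg X.trace]
  let g : GL (Fin 2) ℝ := Matrix.GeneralLinearGroup.mkOfDetNeZero X hdet.ne'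
  have hell : g.IsElliptic := h
  refine ⟨UpperHalfPlane.fixedPt g hell, fun C hC => ?_⟩
  refine smul_eq_of_commute_conj (c := (C : GL (Fin 2) ℝ))
    (fun w => UpperHalfPlane.gl_smul_eq_self_iff_eq_fixedPt hdet hell) (Units.ext hC.eq)

/-- If `commDefect X (C X C⁻¹)` vanishes, then `C` sends some invariant line of `X` to another or,
when there are none, fixes the fixed point of `X` in the hyperbolic plane. -/
theorem exists_commDefect_conj_ne_zero {G : Subgroup PSL2R} (hG : ¬ IsElementary G)
    {X : Matrix (Fin 2) (Fin 2) ℝ} (hX : ∀ a : ℝ, X ≠ a • 1) :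
    ∃ C : SL2R, (QuotientGroup.mk C : PSL2R) ∈ G ∧ commDefect X (conjBy C X) ≠ 0 := by
  by_contra! hcon
  refine hG ?_
  rcases (eigenlines X).eq_empty_or_nonempty with hempty | ⟨p, hp⟩
  · have hdiscr : X.discr < 0 := by
      by_contra! h
      exact (eigenlines_nonempty_of_discr_nonneg h).ne_empty hempty
    obtain ⟨z, hz⟩ := exists_smul_eq_of_commute_conjBy hdiscr
    refine Or.inl ⟨z, (Set.finite_singleton z).subset ?_⟩
    rintro _ ⟨C, hC, rfl⟩
    refine hz C ((commute_or_inter_eigenlines_nonempty (hcon C hC)).resolve_right ?_)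
    simp [hempty]
  · have hret (C : G.comap (QuotientGroup.mk' (Subgroup.center SL2R))) :
        ∃ q ∈ eigenlines X, C⁻¹ • q ∈ eigenlines X := by
      rcases commute_or_inter_eigenlines_nonempty (hcon C C.2) with h | ⟨q, hq, hCq⟩
      · exact ⟨p, hp, inv_smul_mem_eigenlines (eigenlines_subset_of_commute hX h hp)⟩
      · exact ⟨q, hq, inv_smul_mem_eigenlines hCq⟩
    obtain ⟨q, hq⟩ := exists_finite_orbit (eigenlines_finite hX) fun C => by
      simpa using hret C⁻¹
    exact isElementary_of_finite_orbit hq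

open scoped Matrix.Norms.Elementwise in
theorem exists_finite_commDefect_conj_ne_zero {G : Subgroup PSL2R} (hG : ¬ IsElementary G) :
    ∃ F : Set SL2R, F.Finite ∧ (∀ C ∈ F, (QuotientGroup.mk C : PSL2R) ∈ G) ∧
      ∀ X : Matrix (Fin 2) (Fin 2) ℝ, (∀ a : ℝ, X ≠ a • 1) →
        ∃ C ∈ F, commDefect X (conjBy C X) ≠ 0 := by
  let S : Set (Matrix (Fin 2) (Fin 2) ℝ) := Metric.sphere 0 1 ∩ {Y | Y.trace = 0}
  have hS : IsCompact S := (isCompact_sphere 0 1).inter_right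
    (isClosed_eq (by fun_prop) continuous_const)
  have hS₀ (Y) (hY : Y ∈ S) (a : ℝ) : Y ≠ a • 1 := by
    rintro rfl
    have ha : a = 0 := by simpa using hY.2
    simpa [ha] using hY.1
  obtain ⟨F, hFG, hF, hcover⟩ := hS.elim_finite_subcover_image
    (b := {C : SL2R | (QuotientGroup.mk C : PSL2R) ∈ G})
    (c := fun C => {Y | commDefect Y (conjBy C Y) ≠ 0})
    (fun C _ => isOpen_ne_fun (continuous_commDefect_conjBy C) continuous_const)
    (fun Y hY => by simpa using exists_commDefect_conj_ne_zero hG (hS₀ Y hY))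
  refine ⟨F, hF, hFG, fun X hX => ?_⟩
  set Y := X - (X.trace / 2) • (1 : Matrix (Fin 2) (Fin 2) ℝ) with hYdef
  have hY : Y ≠ 0 := sub_ne_zero.2 (hX _)
  have hmem : ‖Y‖⁻¹ • Y ∈ S := by
    refine ⟨by simp [norm_smul, hY], ?_⟩
    simp [hYdef]
  obtain ⟨C, hCF, hC⟩ := Set.mem_iUnion₂.1 (hcover hmem)
  refine ⟨C, hCF, fun h => hC ?_⟩
  rw [hYdef, commDefect_smul_sub_smul_one, h, mul_zero]

end NonElementary

section ProjectiveGroup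

instance : IsTopologicalGroup SL2R :=
  @Matrix.SpecialLinearGroup.topologicalGroup (Fin 2) ℝ _ _ _ _ _

lemma eq_one_or_eq_neg_one_of_coe_eq_smul_one {R : Type*} [CommRing R] [NoZeroDivisors R]
    {M : Matrix.SpecialLinearGroup (Fin 2) R} {a : R} (h : (M : Matrix (Fin 2) (Fin 2) R) = a • 1) :
    M = 1 ∨ M = -1 := by
  have ha : a ^ 2 = 1 := by simpa [h] using M.det_coe
  rcases sq_eq_one_iff.1 ha with rfl | rfl
  · exact Or.inl (Subtype.ext (by simpa using h))
  · exact Or.inr (Subtype.ext (by simpa using h))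

lemma mem_center_iff_eq_one_or_eq_neg_one {R : Type*} [CommRing R] [NoZeroDivisors R]
    {M : Matrix.SpecialLinearGroup (Fin 2) R} :
    M ∈ Subgroup.center (Matrix.SpecialLinearGroup (Fin 2) R) ↔ M = 1 ∨ M = -1 := by
  rw [Matrix.SpecialLinearGroup.mem_center_iff]
  constructor
  · rintro ⟨a, -, h⟩
    exact eq_one_or_eq_neg_one_of_coe_eq_smul_one (a := a) (by simp [← h, smul_one_eq_diagonal])
  · rintro (rfl | rfl)
    · exact ⟨1, by simp⟩
    · exact ⟨-1, by simp, by simp [← smul_one_eq_diagonal]⟩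

lemma mk_eq_mk_iff {A B : SL2R} :
    (QuotientGroup.mk A : PSL2R) = QuotientGroup.mk B ↔ B = A ∨ B = -A := by
  rw [QuotientGroup.eq, mem_center_iff_eq_one_or_eq_neg_one, inv_mul_eq_iff_eq_mul,
    inv_mul_eq_iff_eq_mul, mul_one, mul_neg_one]

lemma isOfFinOrder_of_isOfFinOrder_mk {M : SL2R}
    (h : IsOfFinOrder (QuotientGroup.mk M : PSL2R)) : IsOfFinOrder M := by
  obtain ⟨n, hn, hM⟩ := isOfFinOrder_iff_pow_eq_one.1 h
  refine isOfFinOrder_iff_pow_eq_one.2 ⟨n * 2, by positivity, ?_⟩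
  rw [pow_mul]
  rcases mk_eq_mk_iff.1 (hM : (QuotientGroup.mk (M ^ n) : PSL2R) = QuotientGroup.mk 1).symm
    with h | h <;> simp [h]

lemma absTrace_mk (M : SL2R) : absTrace (QuotientGroup.mk M) = |SL2.tr M| := by
  rcases mk_eq_mk_iff.1 (QuotientGroup.out_eq' (QuotientGroup.mk M : PSL2R)).symm with h | h
  · rw [absTrace, h, SL2.tr]
  · rw [absTrace, h, ← SL2.tr, SL2.tr_neg, abs_neg]

lemma discr_neg_of_abs_tr_lt_two {A : SL2R} (h : |SL2.tr A| < 2) :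
    (A : Matrix (Fin 2) (Fin 2) ℝ).discr < 0 := by
  rw [discr_fin_two, A.det_coe, ← SL2.tr, ← sq_abs]
  nlinarith [abs_nonneg (SL2.tr A)]

end ProjectiveGroup

section NonDiscrete

open Filter Topology SL2

lemma frequently_mem_of_not_discreteTopology {H : Type*} [Group H] [TopologicalSpace H]
    [IsTopologicalGroup H] {G : Subgroup H} (hG : ¬ DiscreteTopology G) :
    ∃ᶠ a in 𝓝 (1 : H), a ∈ G ∧ a ≠ 1 := by
  contrapose! hG
  refine discreteTopology_of_isOpen_singleton_one (isOpen_iff_mem_nhds.2 ?_)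
  rintro _ rfl
  filter_upwards [continuous_subtype_val.continuousAt.eventually hG] with a ha
  exact Subtype.ext (ha a.2)

lemma frequently_mk_mem_of_not_discreteTopology {H : Type*} [Group H] [TopologicalSpace H]
    [IsTopologicalGroup H] {N : Subgroup H} [N.Normal] {G : Subgroup (H ⧸ N)}
    (hG : ¬ DiscreteTopology G) :
    ∃ᶠ a in 𝓝 (1 : H), (QuotientGroup.mk a : H ⧸ N) ∈ G ∧ (QuotientGroup.mk a : H ⧸ N) ≠ 1 := by
  have h := frequently_mem_of_not_discreteTopology hG
  rwa [← QuotientGroup.mk_one, QuotientGroup.nhds_eq, frequently_map] at h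

lemma commDefect_nonneg_of_discr_neg {X : Matrix (Fin 2) (Fin 2) ℝ}
    (h : X.discr < 0) (Y : Matrix (Fin 2) (Fin 2) ℝ) : 0 ≤ commDefect X Y := by
  have hX : 0 < X 0 1 ^ 2 := by
    have := (show X.IsElliptic from h).bc_ne_zero
    positivity [left_ne_zero_of_mul this]
  have key : X 0 1 ^ 2 * commDefect X Y =
      (X 0 1 * (X 0 1 * Y 1 0 - Y 0 1 * X 1 0)
        - (X 0 0 - X 1 1) * ((X 0 0 - X 1 1) * Y 0 1 - (Y 0 0 - Y 1 1) * X 0 1) / 2) ^ 2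
      + -X.discr * ((X 0 0 - X 1 1) * Y 0 1 - (Y 0 0 - Y 1 1) * X 0 1) ^ 2 / 4 := by
    simp only [commDefect, Ring.lie_def, discr_fin_two, det_fin_two, trace_fin_two,
      Matrix.sub_apply, Matrix.mul_apply, Fin.sum_univ_two]
    ring
  refine nonneg_of_mul_nonneg_right (key ▸ ?_) hX
  have := neg_pos.2 h
  positivity

lemma continuous_tr : Continuous (tr : SL2R → ℝ) := by
  unfold tr
  fun_prop

lemma eventually_lt_tr_and_commDefect_lt : ∀ᶠ p : SL2R × SL2R in 𝓝 1,
    -2 < tr p.1 ∧ commDefect (R := ℝ) p.1 p.2 + 3 < tr p.1 ^ 2 := by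
  have htr : Continuous fun p : SL2R × SL2R => tr p.1 := continuous_tr.comp continuous_fst
  have hdef : Continuous fun p : SL2R × SL2R => commDefect (R := ℝ) p.1 p.2 + 3 := by
    simp only [commDefect_eq]
    have h₂ : Continuous fun p : SL2R × SL2R => tr p.2 := continuous_tr.comp continuous_snd
    have h₁₂ : Continuous fun p : SL2R × SL2R => tr (p.1 * p.2) :=
      continuous_tr.comp continuous_mul
    fun_prop
  refine (htr.continuousAt.eventually_const_lt ?_).and
    (hdef.continuousAt.eventually_lt (htr.pow 2).continuousAt ?_)
  · norm_num [tr_one]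
  · norm_num [commDefect, tr_one, Ring.lie_def]

lemma eventually_exists_elliptic_of_commDefect_pos (G : Subgroup SL2R) :
    ∀ᶠ p : SL2R × SL2R in 𝓝 1, p.1 ∈ G → p.2 ∈ G → tr p.2 = tr p.1 →
      0 < commDefect (R := ℝ) p.1 p.2 → ∃ M ∈ G, |tr M| < 2 ∧ ¬ IsOfFinOrder M := by
  have hmul : Tendsto (fun p : SL2R × SL2R => (p.1 * p.2, p.1)) (𝓝 1) (𝓝 1) :=
    Continuous.tendsto' (by fun_prop) _ _ (by simp)
  have hmul_inv : Tendsto (fun p : SL2R × SL2R => (p.1 * p.2⁻¹, p.1)) (𝓝 1) (𝓝 1) :=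
    Continuous.tendsto' (by fun_prop) _ _ (by simp)
  filter_upwards [hmul.eventually eventually_lt_tr_and_commDefect_lt,
    hmul_inv.eventually eventually_lt_tr_and_commDefect_lt]
  rintro ⟨A, B⟩ ⟨hmul₂, hmul₃⟩ ⟨hinv₂, hinv₃⟩ hA hB htr hpos
  have hlt : tr (A * B) < 2 ∨ tr (A * B⁻¹) < 2 := by
    by_contra! h
    rw [commDefect_eq_neg_mul htr] at hpos
    nlinarith [mul_nonneg (sub_nonneg.2 h.1) (sub_nonneg.2 h.2)]
  rcases hlt with h | h
  · exact exists_elliptic_not_isOfFinOrder_of_commDefect_lt (G.mul_mem hA hB) hA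
      (abs_lt.2 ⟨hmul₂, h⟩) (by rwa [commDefect_mul_self]) hmul₃
  · exact exists_elliptic_not_isOfFinOrder_of_commDefect_lt (G.mul_mem hA (G.inv_mem hB)) hA
      (abs_lt.2 ⟨hinv₂, h⟩) (by rwa [commDefect_mul_self, commDefect_inv_right]) hinv₃

-- If `commDefect A B < 0` for `B = C A C⁻¹`, then `tr A ^ 2 ≥ 4` and hence
-- `commDefect A (B A B⁻¹) > 0`.
lemma eventually_exists_elliptic_of_commDefect_conj_ne_zero {G : Subgroup SL2R} {C : SL2R}
    (hC : C ∈ G) :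
    ∀ᶠ A : SL2R in 𝓝 1, A ∈ G → commDefect (R := ℝ) A ↑(C * A * C⁻¹) ≠ 0 →
      ∃ M ∈ G, |tr M| < 2 ∧ ¬ IsOfFinOrder M := by
  have h₁ : Tendsto (fun A : SL2R => (A, C * A * C⁻¹)) (𝓝 1) (𝓝 1) :=
    Continuous.tendsto' (by fun_prop) _ _ (by simp)
  have h₂ : Tendsto (fun A : SL2R => (A, (C * A * C⁻¹) * A * (C * A * C⁻¹)⁻¹)) (𝓝 1) (𝓝 1) :=
    Continuous.tendsto' (by fun_prop) _ _ (by simp)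
  filter_upwards [h₁.eventually (eventually_exists_elliptic_of_commDefect_pos G),
    h₂.eventually (eventually_exists_elliptic_of_commDefect_pos G)] with A hA₁ hA₂ hA hne
  have hB : C * A * C⁻¹ ∈ G := G.mul_mem (G.mul_mem hC hA) (G.inv_mem hC)
  rcases hne.lt_or_gt with hneg | hpos
  · refine hA₂ hA (G.mul_mem (G.mul_mem hB hA) (G.inv_mem hB)) (tr_conj _ _) ?_
    have htr : 2 ≤ |tr A| := by
      by_contra! h
      exact hneg.not_ge (commDefect_nonneg_of_discr_neg (discr_neg_of_abs_tr_lt_two h) _)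
    rw [commDefect_conj_right]
    exact mul_pos_of_neg_of_neg hneg (by nlinarith [sq_abs (tr A)])
  · exact hA₁ hA hB (tr_conj _ _) hpos

theorem exists_isElliptic_not_isOfFinOrder {G : Subgroup PSL2R} (hG : ¬ IsElementary G)
    (hG' : ¬ IsDiscreteSubgroup G) : ∃ A ∈ G, IsElliptic A ∧ ¬ IsOfFinOrder A := by
  obtain ⟨F, hF, hFG, hne⟩ := exists_finite_commDefect_conj_ne_zero hG
  have hev := hF.eventually_all.2 fun C hC =>
    eventually_exists_elliptic_of_commDefect_conj_ne_zero
      (G := G.comap (QuotientGroup.mk' (Subgroup.center SL2R))) (hFG C hC)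
  obtain ⟨A, ⟨hA, hA₁⟩, hAF⟩ :=
    ((frequently_mk_mem_of_not_discreteTopology hG').and_eventually hev).exists
  have hscalar (a : ℝ) : (A : Matrix (Fin 2) (Fin 2) ℝ) ≠ a • 1 := fun h => hA₁
    ((QuotientGroup.eq_one_iff A).2 (mem_center_iff_eq_one_or_eq_neg_one.2
      (eq_one_or_eq_neg_one_of_coe_eq_smul_one h)))
  obtain ⟨C, hC, hCA⟩ := hne A hscalar
  obtain ⟨M, hM, htr, hord⟩ := hAF C hC hA hCA
  exact ⟨QuotientGroup.mk M, hM, (absTrace_mk M).trans_lt htr,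
    mt isOfFinOrder_of_isOfFinOrder_mk hord⟩

end NonDiscrete

section Circle

open ComplexConjugate

lemma denseRange_circle_zpow {u : Circle} (hu : ¬ IsOfFinOrder u) :
    DenseRange fun n : ℤ => u ^ n := by
  obtain ⟨x, rfl⟩ := Circle.exp_surjective u
  have : Fact (0 < 2 * π) := ⟨two_pi_pos⟩
  have hx : addOrderOf (x : AddCircle (2 * π)) = 0 := by
    refine addOrderOf_eq_zero fun h => hu ?_
    obtain ⟨n, hn, h⟩ := isOfFinAddOrder_iff_nsmul_eq_zero.1 h
    refine isOfFinOrder_iff_pow_eq_one.2 ⟨n, hn, ?_⟩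
    rw [← Circle.exp_nsmul, ← AddCircle.homeomorphCircle'_apply_mk, AddCircle.coe_nsmul, h,
      ← AddCircle.coe_zero, AddCircle.homeomorphCircle'_apply_mk, Circle.exp_zero]
  convert AddCircle.homeomorphCircle'.surjective.denseRange.comp
    (AddCircle.denseRange_zsmul_iff.2 hx) AddCircle.homeomorphCircle'.continuous using 2 with n
  rw [Function.comp_apply, ← AddCircle.coe_zsmul, AddCircle.homeomorphCircle'_apply_mk,
    Circle.exp_zsmul]

lemma eq_or_eq_neg_of_abs_re_mul_eq_of_real {r : ℝ} (hr : 1 ≤ r) {w : ℂ}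
    (h : ∀ u : Circle, |(u * r : ℂ).re| < 1 → |(u * r : ℂ).re| = |(u * w : ℂ).re|) :
    w = r ∨ w = -r := by
  have him : w.im = 0 := by
    have := h (Circle.exp (π / 2)) (by simp [Circle.coe_exp])
    simpa [Circle.coe_exp, eq_comm] using this
  have hre : |r| = |w.re| := by
    have : 0 < r := by positivity
    have hcos : cos (arccos (1 / (2 * r))) = 1 / (2 * r) := by
      refine cos_arccos ?_ ?_
      · linarith [show 0 < 1 / (2 * r) by positivity]
      · rw [div_le_one (by positivity)]
        linarith
    have hcos' : (Circle.exp (arccos (1 / (2 * r))) : ℂ).re = 1 / (2 * r) := by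
      rw [Circle.coe_exp, Complex.exp_ofReal_mul_I_re, hcos]
    have := h (Circle.exp (arccos (1 / (2 * r)))) (by
      rw [Complex.re_mul_ofReal, hcos', abs_lt]
      constructor <;> field_simp <;> norm_num)
    rw [Complex.re_mul_ofReal, Complex.mul_re, him, mul_zero, sub_zero, hcos', abs_mul,
      abs_mul] at this
    exact mul_left_cancel₀ (by positivity) this
  exact (abs_eq_abs.1 hre.symm).imp (fun h => Complex.ext h (by simpa using him))
    (fun h => Complex.ext h (by simpa using him))

lemma eq_or_eq_neg_of_abs_re_mul_eq {z z' : ℂ} (hz : 1 ≤ ‖z‖)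
    (h : ∀ u : Circle, |(u * z).re| < 1 → |(u * z).re| = |(u * z').re|) :
    z' = z ∨ z' = -z := by
  have hz_eq : z = Circle.exp z.arg * ‖z‖ := by
    rw [Circle.coe_exp, mul_comm, Complex.norm_mul_exp_arg_mul_I]
  set v := Circle.exp z.arg
  have hz'_eq : z' = v * (v⁻¹ * z') := (mul_inv_cancel_left₀ v.coe_ne_zero z').symm
  have key := eq_or_eq_neg_of_abs_re_mul_eq_of_real hz (w := v⁻¹ * z') fun u hu => by
    have hmul (x : ℂ) : ((u * v⁻¹ : Circle) : ℂ) * (v * x) = u * x := by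
      rw [Circle.coe_mul, Circle.coe_inv, mul_assoc, inv_mul_cancel_left₀ v.coe_ne_zero]
    have := h (u * v⁻¹)
    rw [hz_eq, hz'_eq, hmul, hmul] at this
    exact this hu
  exact key.imp (fun h => by rw [hz'_eq, h, ← hz_eq]) fun h => by rw [hz'_eq, h, mul_neg, ← hz_eq]

lemma exists_circle_mul_eq_of_mul_conj_eq {ι : Type*} {v w : ι → ℂ}
    (h : ∀ i j, v i * conj (v j) = w i * conj (w j)) : ∃ c : Circle, ∀ i, v i = c * w i := by
  have hnorm (i : ι) : ‖v i‖ = ‖w i‖ := by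
    have := h i i
    rw [Complex.mul_conj', Complex.mul_conj'] at this
    exact (sq_eq_sq₀ (norm_nonneg _) (norm_nonneg _)).1 (by exact_mod_cast this)
  by_cases hv : ∃ j, v j ≠ 0
  · obtain ⟨j, hj⟩ := hv
    have hj' : conj (v j) ≠ 0 := (map_ne_zero _).2 hj
    refine ⟨⟨conj (w j) / conj (v j), mem_sphere_zero_iff_norm.2 ?_⟩, fun i => ?_⟩
    · rw [norm_div, RCLike.norm_conj, RCLike.norm_conj, ← hnorm j, div_self (norm_ne_zero_iff.2 hj)]
    · change v i = conj (w j) / conj (v j) * w i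
      rw [div_mul_eq_mul_div, eq_div_iff hj', h i j, mul_comm]
  · push Not at hv
    refine ⟨1, fun i => ?_⟩
    rw [hv i, norm_eq_zero.1 ((hnorm i).symm.trans (by rw [hv i, norm_zero])), mul_zero]

end Circle

section LinPart

open ComplexConjugate

/-- The complex-linear part of a real `2 × 2` matrix. The plane is identified with `ℂ` through
`(x, y) ↦ x - i y`, so that `rotMat x` becomes multiplication by `exp (i x)`. -/
noncomputable def linPart (M : Matrix (Fin 2) (Fin 2) ℝ) : ℂ :=
  ⟨(M 0 0 + M 1 1) / 2, (M 0 1 - M 1 0) / 2⟩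

/-- The complex-antilinear part of a real `2 × 2` matrix, for the same identification of the plane
with `ℂ` as in `linPart`. -/
noncomputable def antilinPart (M : Matrix (Fin 2) (Fin 2) ℝ) : ℂ :=
  ⟨(M 0 0 - M 1 1) / 2, -(M 0 1 + M 1 0) / 2⟩

lemma linPart_mul (M N : Matrix (Fin 2) (Fin 2) ℝ) :
    linPart (M * N) = linPart M * linPart N + antilinPart M * conj (antilinPart N) := by
  apply Complex.ext <;> simp [linPart, antilinPart, Matrix.mul_apply] <;> ring

lemma antilinPart_mul (M N : Matrix (Fin 2) (Fin 2) ℝ) :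
    antilinPart (M * N) = linPart M * antilinPart N + antilinPart M * conj (linPart N) := by
  apply Complex.ext <;> simp [linPart, antilinPart, Matrix.mul_apply] <;> ring

lemma linPart_neg (M : Matrix (Fin 2) (Fin 2) ℝ) : linPart (-M) = -linPart M := by
  apply Complex.ext <;> simp [linPart] <;> ring

lemma trace_eq_two_mul_re_linPart (M : Matrix (Fin 2) (Fin 2) ℝ) :
    M.trace = 2 * (linPart M).re := by
  rw [trace_fin_two, linPart]
  ring

lemma det_eq_normSq_sub_normSq (M : Matrix (Fin 2) (Fin 2) ℝ) :
    M.det = Complex.normSq (linPart M) - Complex.normSq (antilinPart M) := by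
  simp only [det_fin_two, Complex.normSq_apply, linPart, antilinPart]
  ring

lemma eq_of_linPart_eq_of_antilinPart_eq {M N : Matrix (Fin 2) (Fin 2) ℝ}
    (h : linPart M = linPart N) (h' : antilinPart M = antilinPart N) : M = N := by
  simp only [linPart, antilinPart, Complex.mk.injEq] at h h'
  ext i j
  fin_cases i <;> fin_cases j <;> simp only [Fin.zero_eta, Fin.mk_one] <;> linarith

lemma one_le_norm_linPart (A : SL2R) : 1 ≤ ‖linPart A‖ := by
  have h := det_eq_normSq_sub_normSq A
  rw [A.det_coe, Complex.normSq_eq_norm_sq] at h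
  rw [← one_le_sq_iff₀ (norm_nonneg _)]
  linarith [Complex.normSq_nonneg (antilinPart A)]

lemma linPart_ne_zero (A : SL2R) : linPart A ≠ 0 :=
  norm_pos_iff.1 (one_pos.trans_le (one_le_norm_linPart A))

lemma linPart_rotMat (x : ℝ) : linPart (rotMat x) = Circle.exp x := by
  apply Complex.ext <;> simp [linPart, rotMat, Circle.coe_exp, Complex.exp_ofReal_mul_I_re,
    Complex.exp_ofReal_mul_I_im]

lemma antilinPart_rotMat (x : ℝ) : antilinPart (rotMat x) = 0 := by
  apply Complex.ext <;> simp [antilinPart, rotMat]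

lemma exists_eq_rotMat_of_antilinPart_eq_zero {A : SL2R} (h : antilinPart A = 0) :
    ∃ x ∈ Set.Ioc (-π) π, A = rotMat x := by
  have hA := det_eq_normSq_sub_normSq A
  rw [A.det_coe, h, map_zero, sub_zero, Complex.normSq_eq_norm_sq, eq_comm,
    pow_eq_one_iff_of_nonneg (norm_nonneg _) two_ne_zero] at hA
  refine ⟨(linPart A).arg, Complex.arg_mem_Ioc _,
    Subtype.ext (eq_of_linPart_eq_of_antilinPart_eq ?_ (by rw [h, antilinPart_rotMat]))⟩
  have hpolar := Complex.norm_mul_exp_arg_mul_I (linPart A)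
  rw [hA, Complex.ofReal_one, one_mul] at hpolar
  rw [linPart_rotMat, Circle.coe_exp, hpolar]

lemma linPart_rotMat_mul (x : ℝ) (M : Matrix (Fin 2) (Fin 2) ℝ) :
    linPart (rotMat x * M) = Circle.exp x * linPart M := by
  rw [linPart_mul, antilinPart_rotMat, linPart_rotMat, zero_mul, add_zero]

lemma antilinPart_rotMat_mul (x : ℝ) (M : Matrix (Fin 2) (Fin 2) ℝ) :
    antilinPart (rotMat x * M) = Circle.exp x * antilinPart M := by
  rw [antilinPart_mul, antilinPart_rotMat, linPart_rotMat, zero_mul, add_zero]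

lemma rotMat_add (x y : ℝ) : rotMat (x + y) = rotMat x * rotMat y := by
  refine Subtype.ext (eq_of_linPart_eq_of_antilinPart_eq ?_ ?_)
  · rw [Matrix.SpecialLinearGroup.coe_mul, linPart_rotMat_mul, linPart_rotMat, linPart_rotMat,
      Circle.exp_add, Circle.coe_mul]
  · rw [Matrix.SpecialLinearGroup.coe_mul, antilinPart_rotMat_mul, antilinPart_rotMat,
      antilinPart_rotMat, mul_zero]

lemma rotMat_zsmul (x : ℝ) (n : ℤ) : rotMat (n • x) = rotMat x ^ n :=
  map_zpow (MonoidHom.mk' (fun y : Multiplicative ℝ => rotMat y.toAdd) fun a b =>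
    rotMat_add a.toAdd b.toAdd) (Multiplicative.ofAdd x) n

lemma rotMat_zero : rotMat 0 = 1 := by
  simpa using rotMat_zsmul 0 0

lemma rotMat_neg (x : ℝ) : rotMat (-x) = (rotMat x)⁻¹ := by
  simpa using rotMat_zsmul x (-1)

lemma rotMat_add_pi (x : ℝ) : rotMat (x + π) = -rotMat x := by
  refine Subtype.ext ?_
  rw [Matrix.SpecialLinearGroup.coe_neg]
  ext i j
  fin_cases i <;> fin_cases j <;> simp [rotMat]

lemma isOfFinOrder_rotMat {x : ℝ} (h : IsOfFinOrder (Circle.exp x)) : IsOfFinOrder (rotMat x) := by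
  obtain ⟨n, hn, h⟩ := isOfFinOrder_iff_zpow_eq_one.1 h
  refine isOfFinOrder_iff_zpow_eq_one.2 ⟨n, hn, ?_⟩
  rw [← rotMat_zsmul]
  refine Subtype.ext (eq_of_linPart_eq_of_antilinPart_eq ?_ ?_)
  · rw [linPart_rotMat, Circle.exp_zsmul, h, ← rotMat_zero, linPart_rotMat, Circle.exp_zero]
  · rw [antilinPart_rotMat, ← rotMat_zero, antilinPart_rotMat]

lemma linPart_rotMat_conj (x : ℝ) (A : SL2R) :
    linPart ↑(rotMat x * A * (rotMat x)⁻¹) = linPart A := by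
  rw [← rotMat_neg, Matrix.SpecialLinearGroup.coe_mul, Matrix.SpecialLinearGroup.coe_mul,
    linPart_mul, linPart_rotMat_mul, antilinPart_rotMat, linPart_rotMat, Circle.exp_neg,
    Circle.coe_inv, map_zero, mul_zero, add_zero]
  field_simp

lemma antilinPart_rotMat_conj (x : ℝ) (A : SL2R) :
    antilinPart ↑(rotMat x * A * (rotMat x)⁻¹) = Circle.exp (2 * x) * antilinPart A := by
  rw [← rotMat_neg, Matrix.SpecialLinearGroup.coe_mul, Matrix.SpecialLinearGroup.coe_mul,
    antilinPart_mul, antilinPart_rotMat_mul, antilinPart_rotMat, linPart_rotMat, Circle.exp_neg,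
    Circle.coe_inv_eq_conj, Complex.conj_conj, mul_zero, zero_add, two_mul, Circle.exp_add,
    Circle.coe_mul]
  ring

end LinPart

section RotationNumber

lemma isConj_mk_iff {A B : SL2R} :
    IsConj (QuotientGroup.mk A : PSL2R) (QuotientGroup.mk B) ↔
      ∃ C : SL2R, B = C * A * C⁻¹ ∨ B = -(C * A * C⁻¹) := by
  rw [isConj_iff, QuotientGroup.mk_surjective.exists]
  exact exists_congr fun C => mk_eq_mk_iff (A := C * A * C⁻¹)

lemma absTrace_eq_of_isConj {P Q : PSL2R} (h : IsConj P Q) : absTrace P = absTrace Q := by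
  obtain ⟨A, rfl⟩ := QuotientGroup.mk_surjective P
  obtain ⟨B, rfl⟩ := QuotientGroup.mk_surjective Q
  rw [absTrace_mk, absTrace_mk]
  obtain ⟨C, rfl | rfl⟩ := isConj_mk_iff.1 h
  · rw [SL2.tr_conj]
  · rw [SL2.tr_neg, SL2.tr_conj, abs_neg]

lemma tr_rotMat (x : ℝ) : SL2.tr (rotMat x) = 2 * cos x := by
  rw [SL2.tr, trace_eq_two_mul_re_linPart, linPart_rotMat, Circle.coe_exp,
    Complex.exp_ofReal_mul_I_re]

lemma im_linPart_conj_rotMat (x : ℝ) (C : SL2R) :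
    (linPart ↑(C * rotMat x * C⁻¹)).im
      = sin x * (Complex.normSq (linPart C) + Complex.normSq (antilinPart C)) := by
  rw [Matrix.SpecialLinearGroup.coe_mul, Matrix.SpecialLinearGroup.coe_mul,
    Matrix.SpecialLinearGroup.coe_inv, adjugate_fin_two]
  simp [linPart, antilinPart, rotMat, Complex.normSq_apply, Matrix.mul_apply]
  ring

lemma im_linPart_conj_rotMat_pos {x : ℝ} (hx : x ∈ Set.Ioo 0 π) (C : SL2R) :
    0 < (linPart ↑(C * rotMat x * C⁻¹)).im := by
  rw [im_linPart_conj_rotMat]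
  exact mul_pos (sin_pos_of_mem_Ioo hx)
    (add_pos_of_pos_of_nonneg (Complex.normSq_pos.2 (linPart_ne_zero C)) (Complex.normSq_nonneg _))

lemma eq_of_isConj_mk_rotMat {x y : ℝ} (hx : x ∈ Set.Ioo 0 π) (hy : y ∈ Set.Ioo 0 π)
    (h : IsConj (QuotientGroup.mk (rotMat x) : PSL2R) (QuotientGroup.mk (rotMat y))) : x = y := by
  obtain ⟨C, hC | hC⟩ := isConj_mk_iff.1 h
  · have htr := congrArg SL2.tr hC
    rw [SL2.tr_conj, tr_rotMat, tr_rotMat] at htr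
    exact injOn_cos (Set.Ioo_subset_Icc_self hx) (Set.Ioo_subset_Icc_self hy) (by linarith)
  · have hx' := im_linPart_conj_rotMat_pos hx C
    have hy' := im_linPart_conj_rotMat_pos hy 1
    rw [one_mul, inv_one, mul_one, hC, Matrix.SpecialLinearGroup.coe_neg, linPart_neg,
      Complex.neg_im] at hy'
    linarith

lemma rot_eq_of_isConj_mk_rotMat {x : ℝ} (hx : x ∈ Set.Ioo 0 π) {P : PSL2R}
    (h : IsConj (QuotientGroup.mk (rotMat x)) P) : rot P = ((2 * x : ℝ) : AddCircle (2 * π)) := by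
  have hex : ∃ y ∈ Set.Ioo 0 π, IsConj (QuotientGroup.mk (rotMat y)) P := ⟨x, hx, h⟩
  rw [rot, dif_pos hex,
    eq_of_isConj_mk_rotMat hex.choose_spec.1 hx (hex.choose_spec.2.trans h.symm)]

lemma injOn_coe_two_mul_addCircle :
    Set.InjOn (fun x : ℝ => ((2 * x : ℝ) : AddCircle (2 * π))) (Set.Ico 0 π) := by
  intro x hx y hy h
  have : Fact (0 < 2 * π) := ⟨two_pi_pos⟩
  have := (AddCircle.coe_eq_coe_iff_of_mem_Ico (p := 2 * π) (a := 0)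
    ⟨by linarith [hx.1], by linarith [hx.2]⟩ ⟨by linarith [hy.1], by linarith [hy.2]⟩).1 h
  linarith

lemma exists_smul_eq_self {A : SL2R} (hA : |SL2.tr A| < 2) :
    ∃ z : UpperHalfPlane, A • z = z := by
  have hell : (A : GL (Fin 2) ℝ).IsElliptic := discr_neg_of_abs_tr_lt_two hA
  exact ⟨UpperHalfPlane.fixedPt _ hell,
    (UpperHalfPlane.gl_smul_eq_self_iff_eq_fixedPt (by simp) hell).2 rfl⟩

lemma antilinPart_eq_zero_of_smul_I {A : SL2R} (hA : A • UpperHalfPlane.I = UpperHalfPlane.I) :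
    antilinPart A = 0 := by
  have h := (UpperHalfPlane.gl_smul_I_eq_I_iff_of_pos (g := (A : GL (Fin 2) ℝ)) (by simp)).1 hA
  apply Complex.ext <;> simp_all [antilinPart]

lemma exists_conj_eq_rotMat {A : SL2R} (hA : |SL2.tr A| < 2) :
    ∃ x ∈ Set.Ioc (-π) π, ∃ C : SL2R, A = C * rotMat x * C⁻¹ := by
  obtain ⟨z, hz⟩ := exists_smul_eq_self hA
  have hI : (z.toSL2R⁻¹ * A * z.toSL2R) • UpperHalfPlane.I = UpperHalfPlane.I := by
    rw [mul_smul, mul_smul, UpperHalfPlane.toSL2R_smul_I, hz, inv_smul_eq_iff,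
      UpperHalfPlane.toSL2R_smul_I]
  obtain ⟨x, hx, h⟩ :=
    exists_eq_rotMat_of_antilinPart_eq_zero (antilinPart_eq_zero_of_smul_I hI)
  exact ⟨x, hx, z.toSL2R, by rw [← h]; group⟩

lemma exists_isConj_mk_rotMat {P : PSL2R} (hP : IsElliptic P) :
    ∃ x ∈ Set.Ioo 0 π, IsConj (QuotientGroup.mk (rotMat x)) P := by
  obtain ⟨A, rfl⟩ := QuotientGroup.mk_surjective P
  rw [_root_.IsElliptic, absTrace_mk] at hP
  obtain ⟨x, hx, C, rfl⟩ := exists_conj_eq_rotMat hP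
  rw [SL2.tr_conj, tr_rotMat] at hP
  have hx₀ : x ≠ 0 := by
    rintro rfl
    simp at hP
  have hxπ : x ≠ π := by
    rintro rfl
    simp at hP
  rcases hx₀.lt_or_gt with hneg | hpos
  · refine ⟨x + π, ⟨by linarith [hx.1], by linarith⟩, isConj_mk_iff.2 ⟨C, Or.inr ?_⟩⟩
    rw [rotMat_add_pi, mul_neg, neg_mul, neg_neg]
  · exact ⟨x, ⟨hpos, hx.2.lt_of_ne hxπ⟩, isConj_mk_iff.2 ⟨C, Or.inl rfl⟩⟩

lemma isConj_of_rot_eq {P Q : PSL2R} (hP : IsElliptic P) (h : rot P = rot Q) : IsConj P Q := by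
  obtain ⟨x, hx, hxP⟩ := exists_isConj_mk_rotMat hP
  rw [rot_eq_of_isConj_mk_rotMat hx hxP] at h
  by_cases hQ : ∃ y ∈ Set.Ioo 0 π, IsConj (QuotientGroup.mk (rotMat y)) Q
  · obtain ⟨y, hy, hyQ⟩ := hQ
    rw [rot_eq_of_isConj_mk_rotMat hy hyQ] at h
    rw [injOn_coe_two_mul_addCircle (Set.Ioo_subset_Ico_self hx) (Set.Ioo_subset_Ico_self hy) h]
      at hxP
    exact hxP.symm.trans hyQ
  · rw [rot, dif_neg hQ] at h
    exact absurd (injOn_coe_two_mul_addCircle (Set.Ioo_subset_Ico_self hx) ⟨le_rfl, pi_pos⟩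
      (by simpa using h)) hx.1.ne'

end RotationNumber

section CommonRotation

open ComplexConjugate

variable {G : Subgroup (PSL2R × PSL2R)} {x : ℝ}

lemma linPart_eq_or_eq_neg_of_mem
    (hG : ∀ p ∈ G, IsElliptic p.1 → absTrace p.1 = absTrace p.2)
    (hx : ((QuotientGroup.mk (rotMat x) : PSL2R), (QuotientGroup.mk (rotMat x) : PSL2R)) ∈ G)
    (hfin : ¬ IsOfFinOrder (Circle.exp x)) {A B : SL2R}
    (hAB : ((QuotientGroup.mk A : PSL2R), (QuotientGroup.mk B : PSL2R)) ∈ G) :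
    linPart B = linPart A ∨ linPart B = -linPart A := by
  refine eq_or_eq_neg_of_abs_re_mul_eq (one_le_norm_linPart A) fun u => ?_
  suffices u ∈ {u : Circle | 1 ≤ |(u * linPart A).re| ∨
      |(u * linPart A).re| = |(u * linPart B).re|} from
    fun hu => this.resolve_left hu.not_ge
  have hcont (z : ℂ) : Continuous fun u : Circle => |((u : ℂ) * z).re| :=
    (Complex.continuous_re.comp (continuous_subtype_val.mul continuous_const)).abs
  have hclosed : IsClosed {u : Circle | 1 ≤ |(u * linPart A).re| ∨
      |(u * linPart A).re| = |(u * linPart B).re|} :=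
    (isClosed_le continuous_const (hcont _)).union (isClosed_eq (hcont _) (hcont _))
  refine (denseRange_circle_zpow hfin).induction_on u hclosed fun n => ?_
  have hmem : ((QuotientGroup.mk (rotMat x ^ n * A) : PSL2R),
      (QuotientGroup.mk (rotMat x ^ n * B) : PSL2R)) ∈ G := G.mul_mem (G.zpow_mem hx n) hAB
  have h := hG _ hmem
  rw [_root_.IsElliptic, absTrace_mk, absTrace_mk, ← rotMat_zsmul, SL2.tr, SL2.tr,
    Matrix.SpecialLinearGroup.coe_mul, Matrix.SpecialLinearGroup.coe_mul,
    trace_eq_two_mul_re_linPart, trace_eq_two_mul_re_linPart, linPart_rotMat_mul,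
    linPart_rotMat_mul, Circle.exp_zsmul, abs_mul, abs_mul, abs_two] at h
  rcases le_or_gt 1 |((Circle.exp x ^ n : Circle) * linPart A).re| with hle | hlt
  · exact Or.inl hle
  · exact Or.inr (mul_left_cancel₀ two_ne_zero (h (by linarith)))

lemma eq_of_add_eq_or_eq_neg {K : Type*} [Field K] [CharZero K] {s p q u v : K} (hs : s ≠ 0)
    (hv : v ≠ 0) (huv : u ≠ v) (h₁ : s + q = s + p ∨ s + q = -(s + p))
    (h₂ : u * s + v * q = u * s + v * p ∨ u * s + v * q = -(u * s + v * p)) : p = q := by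
  rcases h₁ with h₁ | h₁
  · exact (add_left_cancel h₁).symm
  rcases h₂ with h₂ | h₂
  · exact (mul_left_cancel₀ hv (add_left_cancel h₂)).symm
  · have : (u - v) * s = 0 := by linear_combination h₂ / 2 - v * h₁ / 2
    exact absurd this (mul_ne_zero (sub_ne_zero.2 huv) hs)

lemma antilinPart_mul_conj_eq_of_mem
    (hG : ∀ p ∈ G, IsElliptic p.1 → absTrace p.1 = absTrace p.2)
    (hx : ((QuotientGroup.mk (rotMat x) : PSL2R), (QuotientGroup.mk (rotMat x) : PSL2R)) ∈ G)
    (hfin : ¬ IsOfFinOrder (Circle.exp x)) {A B C D : SL2R}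
    (hAB : ((QuotientGroup.mk A : PSL2R), (QuotientGroup.mk B : PSL2R)) ∈ G)
    (hCD : ((QuotientGroup.mk C : PSL2R), (QuotientGroup.mk D : PSL2R)) ∈ G)
    (hBA : linPart B = linPart A) (hDC : linPart D = linPart C) :
    antilinPart A * conj (antilinPart C) = antilinPart B * conj (antilinPart D) := by
  have hmul : linPart ↑(B * D) = linPart ↑(A * C) ∨ linPart ↑(B * D) = -linPart ↑(A * C) :=
    linPart_eq_or_eq_neg_of_mem hG hx hfin (G.mul_mem hAB hCD)
  have hmul_rot : linPart ↑(B * (rotMat x * D)) = linPart ↑(A * (rotMat x * C)) ∨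
      linPart ↑(B * (rotMat x * D)) = -linPart ↑(A * (rotMat x * C)) :=
    linPart_eq_or_eq_neg_of_mem hG hx hfin (G.mul_mem hAB (G.mul_mem hx hCD))
  have hexp : (Circle.exp x : ℂ) ≠ conj (Circle.exp x : ℂ) := by
    rw [← Circle.coe_inv_eq_conj, Ne, Circle.coe_inj, eq_inv_iff_mul_eq_one, ← sq]
    exact fun h => hfin (isOfFinOrder_iff_pow_eq_one.2 ⟨2, two_pos, h⟩)
  simp only [Matrix.SpecialLinearGroup.coe_mul, linPart_mul _ (D : Matrix (Fin 2) (Fin 2) ℝ),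
    linPart_mul _ (C : Matrix (Fin 2) (Fin 2) ℝ), hBA, hDC] at hmul
  simp only [Matrix.SpecialLinearGroup.coe_mul, linPart_mul _ ((rotMat x : Matrix _ _ ℝ) * _),
    linPart_rotMat_mul, antilinPart_rotMat_mul, map_mul, hBA, hDC,
    mul_left_comm _ (Circle.exp x : ℂ), mul_left_comm _ (conj (Circle.exp x : ℂ))] at hmul_rot
  exact eq_of_add_eq_or_eq_neg (mul_ne_zero (linPart_ne_zero A) (linPart_ne_zero C))
    ((map_ne_zero _).2 (Circle.coe_ne_zero _)) hexp hmul hmul_rot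

lemma exists_mem_linPart_eq
    (hG : ∀ p ∈ G, IsElliptic p.1 → absTrace p.1 = absTrace p.2)
    (hx : ((QuotientGroup.mk (rotMat x) : PSL2R), (QuotientGroup.mk (rotMat x) : PSL2R)) ∈ G)
    (hfin : ¬ IsOfFinOrder (Circle.exp x)) {p : PSL2R × PSL2R} (hp : p ∈ G) :
    ∃ A B : SL2R, p = (QuotientGroup.mk A, QuotientGroup.mk B) ∧ linPart B = linPart A := by
  obtain ⟨⟨A, hA⟩, ⟨B, hB⟩⟩ := QuotientGroup.mk_surjective p.1, QuotientGroup.mk_surjective p.2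
  obtain rfl : p = (QuotientGroup.mk A, QuotientGroup.mk B) := Prod.ext hA.symm hB.symm
  rcases linPart_eq_or_eq_neg_of_mem hG hx hfin hp with h | h
  · exact ⟨A, B, rfl, h⟩
  · refine ⟨A, -B, congrArg (Prod.mk _) (mk_eq_mk_iff.2 (Or.inr rfl)), ?_⟩
    rw [Matrix.SpecialLinearGroup.coe_neg, linPart_neg, h, neg_neg]

theorem exists_conj_of_absTrace_eq
    (hG : ∀ p ∈ G, IsElliptic p.1 → absTrace p.1 = absTrace p.2)
    (hx : ((QuotientGroup.mk (rotMat x) : PSL2R), (QuotientGroup.mk (rotMat x) : PSL2R)) ∈ G)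
    (hfin : ¬ IsOfFinOrder (Circle.exp x)) :
    ∃ g : PSL2R, ∀ p ∈ G, p.1 = g * p.2 * g⁻¹ := by
  choose A B hAB hlin using fun p : G => exists_mem_linPart_eq hG hx hfin p.2
  have hmem (p : G) : ((QuotientGroup.mk (A p) : PSL2R), (QuotientGroup.mk (B p) : PSL2R)) ∈ G :=
    hAB p ▸ p.2
  obtain ⟨c, hc⟩ := exists_circle_mul_eq_of_mul_conj_eq fun p q =>
    antilinPart_mul_conj_eq_of_mem hG hx hfin (hmem p) (hmem q) (hlin p) (hlin q)
  obtain ⟨y, rfl⟩ := Circle.exp_surjective c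
  have hconj (p : G) : A p = rotMat (y / 2) * B p * (rotMat (y / 2))⁻¹ := by
    refine Subtype.ext (eq_of_linPart_eq_of_antilinPart_eq ?_ ?_)
    · rw [linPart_rotMat_conj, hlin]
    · rw [antilinPart_rotMat_conj, mul_div_cancel₀ _ two_ne_zero, hc]
  have hmk (p : G) : p.1.1 = QuotientGroup.mk (rotMat (y / 2)) * p.1.2 *
      (QuotientGroup.mk (rotMat (y / 2)))⁻¹ := by
    rw [hAB p]
    exact congrArg QuotientGroup.mk (hconj p)
  exact ⟨_, fun p hp => hmk ⟨p, hp⟩⟩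

end CommonRotation

section Rigidity

variable {Γ : Type*} [Group Γ]

theorem exists_conj_of_isConj_of_mk_rotMat {σ₁ σ₂ : Γ →* PSL2R} {α : Γ} {x : ℝ}
    (h₁ : σ₁ α = QuotientGroup.mk (rotMat x)) (h₂ : σ₂ α = QuotientGroup.mk (rotMat x))
    (hα : ¬ IsOfFinOrder (σ₁ α)) (hconj : ∀ γ, IsElliptic (σ₁ γ) → IsConj (σ₁ γ) (σ₂ γ)) :
    ∃ g : PSL2R, ∀ γ, σ₁ γ = g * σ₂ γ * g⁻¹ := by
  have hfin : ¬ IsOfFinOrder (Circle.exp x) := fun h => hα <| h₁ ▸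
    (QuotientGroup.mk' (Subgroup.center SL2R)).isOfFinOrder (isOfFinOrder_rotMat h)
  have hx : ((QuotientGroup.mk (rotMat x) : PSL2R), (QuotientGroup.mk (rotMat x) : PSL2R)) ∈
      (σ₁.prod σ₂).range := ⟨α, Prod.ext h₁ h₂⟩
  obtain ⟨g, hg⟩ := exists_conj_of_absTrace_eq (by
    rintro _ ⟨γ, rfl⟩ hγ
    exact absTrace_eq_of_isConj (hconj γ hγ)) hx hfin
  exact ⟨g, fun γ => hg _ ⟨γ, rfl⟩⟩

theorem exists_conj_of_isConj {ρ₁ ρ₂ : Γ →* PSL2R} {α : Γ} (hα : IsElliptic (ρ₁ α))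
    (hα' : ¬ IsOfFinOrder (ρ₁ α)) (hconj : ∀ γ, IsElliptic (ρ₁ γ) → IsConj (ρ₁ γ) (ρ₂ γ)) :
    ∃ g : PSL2R, ∀ γ, ρ₁ γ = g * ρ₂ γ * g⁻¹ := by
  obtain ⟨x, -, hx₁⟩ := exists_isConj_mk_rotMat hα
  obtain ⟨g₁, hg₁⟩ := isConj_iff.1 hx₁.symm
  obtain ⟨g₂, hg₂⟩ := isConj_iff.1 (hx₁.trans (hconj α hα)).symm
  have hconj₁ (γ : Γ) : IsConj (ρ₁ γ) (g₁ * ρ₁ γ * g₁⁻¹) := isConj_iff.2 ⟨g₁, rfl⟩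
  have hconj₂ (γ : Γ) : IsConj (ρ₂ γ) (g₂ * ρ₂ γ * g₂⁻¹) := isConj_iff.2 ⟨g₂, rfl⟩
  obtain ⟨g, hg⟩ := exists_conj_of_isConj_of_mk_rotMat
    (σ₁ := (MulAut.conj g₁).toMonoidHom.comp ρ₁) (σ₂ := (MulAut.conj g₂).toMonoidHom.comp ρ₂)
    hg₁ hg₂ (fun h => hα' ((hconj₁ α).symm.isOfFinOrder h)) fun γ hγ =>
      (hconj₁ γ).symm.trans <| (hconj γ ((absTrace_eq_of_isConj (hconj₁ γ)).trans_lt hγ)).trans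
        (hconj₂ γ)
  refine ⟨g₁⁻¹ * g * g₂, fun γ => (MulAut.conj g₁).injective ((hg γ).trans ?_)⟩
  simp only [MonoidHom.comp_apply, MulEquiv.coe_toMonoidHom, MulAut.conj_apply]
  group

theorem rotation_number_rigidity_general (ρ₁ ρ₂ : Γ →* PSL2R)
    (h_nonelem : ¬ IsElementary ρ₁.range) (h_nondisc : ¬ IsDiscreteSubgroup ρ₁.range)
    (h_rot : ∀ γ : Γ, IsElliptic (ρ₁ γ) → rot (ρ₁ γ) = rot (ρ₂ γ)) :
    ∃ g : PSL2R, ∀ γ : Γ, ρ₁ γ = g * ρ₂ γ * g⁻¹ := by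
  obtain ⟨_, ⟨α, rfl⟩, hell, hinf⟩ := exists_isElliptic_not_isOfFinOrder h_nonelem h_nondisc
  exact exists_conj_of_isConj hell hinf fun γ hγ => isConj_of_rot_eq hγ (h_rot γ hγ)

end Rigidity

/-- **Proposition (Wolff).** If `Γ` is any group, `ρ₁, ρ₂ : Γ → PSL(2,ℝ)` are homomorphisms,
`ρ₁(Γ)` is non elementary and non discrete, and for every `γ ∈ Γ` the rotation numbers of
`ρ₁(γ)` and `ρ₂(γ)` coincide, then `ρ₁` and `ρ₂` are conjugate in `PSL(2,ℝ)`. -/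
theorem rotation_number_rigidity {Γ : Type*} [Group Γ] (ρ₁ ρ₂ : Γ →* PSL2R)
    (h_nonelem : ¬ IsElementary ρ₁.range)
    (h_nondisc : ¬ IsDiscreteSubgroup ρ₁.range)
    (h_rot : ∀ γ : Γ, rot (ρ₁ γ) = rot (ρ₂ γ)) :
    ∃ g : PSL2R, ∀ γ : Γ, ρ₁ γ = g * ρ₂ γ * g⁻¹ :=
  rotation_number_rigidity_general ρ₁ ρ₂ h_nonelem h_nondisc fun γ _ => h_rot γ
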